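/- Let M_c, M_p, Z^n take values in finite sets, with M_c and M_p independent, and let Z^n be generated from (M_c, M_p) through a fixed conditional distribution p_{Z^n | M_c, M_p}. Let p̃ denote the joint distribution obtained by replacing the distribution of M_p with the uniform distribution on its range (keeping p_{M_c} and p_{Z^n | M_c, M_p} unchanged). Suppose that V(p_{M_p}, uniform) ≤ ε and that max_{m_c} V(p̃_{Z^n | M_c = m_c}, p̃_{Z^n}) ≤ ε. Then max_{m_c} V(p_{Z^n | M_c = m_c}, p_{Z^n}) ≤ 3ε. -/

import Mathlib

open Finset Filter Real

attribute [local instance] Classical.propDecidable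

noncomputable section

/-- `p` is a probability mass function on the finite type `α`. -/
def IsPMF {α : Type*} [Fintype α] (p : α → ℝ) : Prop :=
  (∀ a, 0 ≤ p a) ∧ ∑ a, p a = 1

/-- i.i.d. (product) distribution of `n` copies of a source with pmf `p`. -/
def iid {α : Type*} [Fintype α] (p : α → ℝ) (n : ℕ) : (Fin n → α) → ℝ :=
  fun x => ∏ i, p (x i)

/-- variational distance between two pmfs -/
def VD {α : Type*} [Fintype α] (p q : α → ℝ) : ℝ := ∑ a, |p a - q a|

/-- Shannon entropy, base 2 -/
def Hsh {α : Type*} [Fintype α] (p : α → ℝ) : ℝ := - ∑ a, p a * Real.logb 2 (p a)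

/-- Rényi entropy of order 2, base 2 -/
def H2 {α : Type*} [Fintype α] (p : α → ℝ) : ℝ := - Real.logb 2 (∑ a, (p a) ^ 2)

/-- min-entropy, base 2 -/
def Hinf {α : Type*} [Fintype α] (p : α → ℝ) : ℝ := - Real.logb 2 (⨆ a, p a)

/-- Kullback–Leibler divergence, base 2 -/
def KL {α : Type*} [Fintype α] (p q : α → ℝ) : ℝ := ∑ a, p a * Real.logb 2 (p a / q a)

/-- pushforward of a pmf along a map -/
def push {α β : Type*} [Fintype α] [Fintype β] (p : α → ℝ) (f : α → β) : β → ℝ :=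
  fun b => ∑ a, if f a = b then p a else 0

/-- conditional mutual information `I(X;Y|Q)` of a joint pmf on `Q × X × Y`, base 2:
`I(X;Y|Q) = H(Q,X) + H(Q,Y) - H(Q) - H(Q,X,Y)`. -/
def condMI {Q X Y : Type*} [Fintype Q] [Fintype X] [Fintype Y] (p : Q × X × Y → ℝ) : ℝ :=
  Hsh (fun qx : Q × X => ∑ y, p (qx.1, qx.2, y))
    + Hsh (fun qy : Q × Y => ∑ x, p (qy.1, x, qy.2))
    - Hsh (fun q : Q => ∑ x, ∑ y, p (q, x, y))
    - Hsh p

/-- the set of `ε`-letter-typical sequences of length `n` -/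
def typ {α : Type*} [Fintype α] (p : α → ℝ) (n : ℕ) (ε : ℝ) : Finset (Fin n → α) :=
  Finset.univ.filter fun x =>
    ∀ a, |((Finset.univ.filter fun i => x i = a).card : ℝ) / n - p a| ≤ ε * p a

/-- cumulative distribution function of the standard normal distribution -/
def stdΦ (x : ℝ) : ℝ := ∫ t in Set.Iic x, Real.exp (-(t ^ 2) / 2) / Real.sqrt (2 * Real.pi)

/-- `⌈2^r⌉₊`, the size of a message set `{1,…,2^r}` -/
def e2 (r : ℝ) : ℕ := ⌈(2:ℝ) ^ r⌉₊


/-!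
The public message enters linearly, and averaging is a contraction for the variational distance
both in the weights (data processing) and in the averaged distributions (convexity). Replacing
`p_{M_p}` by a distribution at distance `δ` thus moves each `p_{Z^n | M_c = m_c}` and their average
`p_{Z^n}` by at most `δ`, so their mutual distance moves by at most `2 * δ`.
-/

section VariationalDistance

variable {α : Type*} [Fintype α]

theorem VD_comm (p q : α → ℝ) : VD p q = VD q p :=
  sum_congr rfl fun _ _ => abs_sub_comm _ _

theorem VD_triangle (p q r : α → ℝ) : VD p r ≤ VD p q + VD q r :=
  calc VD p r ≤ ∑ a, (|p a - q a| + |q a - r a|) := sum_le_sum fun _ _ => abs_sub_le _ _ _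
    _ = VD p q + VD q r := sum_add_distrib

theorem IsPMF.sum_abs_eq_one {p : α → ℝ} (hp : IsPMF p) : ∑ a, |p a| = 1 := by
  simp only [abs_of_nonneg (hp.1 _), hp.2]

end VariationalDistance

/-- The mixture `∑ a, p a • w a` of the functions `w a` with weights `p a`. For a pmf `p` and a
conditional distribution `w` it is the output distribution; signed `p` and `w` are allowed, so that
differences of mixtures are mixtures. -/
def mixture {α β : Type*} [Fintype α] (p : α → ℝ) (w : α → β → ℝ) : β → ℝ :=
  fun b => ∑ a, p a * w a b

section Mixture

variable {α β : Type*} [Fintype α]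

theorem mixture_sub_left (p q : α → ℝ) (w : α → β → ℝ) :
    mixture (p - q) w = mixture p w - mixture q w := by
  ext b
  simp only [mixture, Pi.sub_apply, sub_mul, sum_sub_distrib]

theorem mixture_sub_right (p : α → ℝ) (v w : α → β → ℝ) :
    mixture p (v - w) = mixture p v - mixture p w := by
  ext b
  simp only [mixture, Pi.sub_apply, mul_sub, sum_sub_distrib]

variable [Fintype β]

theorem sum_abs_mixture_le (p : α → ℝ) (w : α → β → ℝ) :
    ∑ b, |mixture p w b| ≤ ∑ a, |p a| * ∑ b, |w a b| :=
  calc ∑ b, |mixture p w b|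
      ≤ ∑ b, ∑ a, |p a * w a b| := sum_le_sum fun _ _ => abs_sum_le_sum_abs _ _
    _ = ∑ a, ∑ b, |p a * w a b| := sum_comm
    _ = ∑ a, |p a| * ∑ b, |w a b| := by simp only [abs_mul, mul_sum]

theorem VD_mixture_left_le (p q : α → ℝ) {w : α → β → ℝ} (hw : ∀ a, IsPMF (w a)) :
    VD (mixture p w) (mixture q w) ≤ VD p q :=
  calc VD (mixture p w) (mixture q w)
      = ∑ b, |mixture (p - q) w b| := by simp only [VD, mixture_sub_left, Pi.sub_apply]
    _ ≤ ∑ a, |(p - q) a| * ∑ b, |w a b| := sum_abs_mixture_le _ _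
    _ = VD p q := by simp only [(hw _).sum_abs_eq_one, mul_one, VD, Pi.sub_apply]

theorem VD_mixture_right_le_sum (p : α → ℝ) (v w : α → β → ℝ) :
    VD (mixture p v) (mixture p w) ≤ ∑ a, |p a| * VD (v a) (w a) :=
  calc VD (mixture p v) (mixture p w)
      = ∑ b, |mixture p (v - w) b| := by simp only [VD, mixture_sub_right, Pi.sub_apply]
    _ ≤ ∑ a, |p a| * ∑ b, |(v - w) a b| := sum_abs_mixture_le _ _

theorem VD_mixture_right_le {p : α → ℝ} (hp : IsPMF p) {v w : α → β → ℝ} {δ : ℝ}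
    (h : ∀ a, VD (v a) (w a) ≤ δ) : VD (mixture p v) (mixture p w) ≤ δ :=
  calc VD (mixture p v) (mixture p w)
      ≤ ∑ a, |p a| * VD (v a) (w a) := VD_mixture_right_le_sum p v w
    _ ≤ ∑ a, |p a| * δ := sum_le_sum fun a _ => mul_le_mul_of_nonneg_left (h a) (abs_nonneg _)
    _ = δ := by rw [← sum_mul, hp.sum_abs_eq_one, one_mul]

theorem VD_self_mixture_le {p : α → ℝ} (hp : IsPMF p) {v w : α → β → ℝ} {δ ε : ℝ}
    (hvw : ∀ a, VD (v a) (w a) ≤ δ) (hw : ∀ a, VD (w a) (mixture p w) ≤ ε) (a : α) :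
    VD (v a) (mixture p v) ≤ ε + 2 * δ := by
  have hmix : VD (mixture p w) (mixture p v) ≤ δ :=
    (VD_comm _ _).trans_le (VD_mixture_right_le hp hvw)
  calc VD (v a) (mixture p v)
      ≤ VD (v a) (w a) + (VD (w a) (mixture p w) + VD (mixture p w) (mixture p v)) :=
        (VD_triangle _ (w a) _).trans (add_le_add_right (VD_triangle _ _ _) _)
    _ ≤ δ + (ε + δ) := add_le_add (hvw a) (add_le_add (hw a) hmix)
    _ = ε + 2 * δ := by ring

end Mixture

theorem statement17_general {Mc Mp Zt : Type*} [Fintype Mc] [Fintype Mp] [Fintype Zt]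
    (pMc : Mc → ℝ) (pMp qMp : Mp → ℝ) (k : Mc → Mp → Zt → ℝ)
    (hMc : IsPMF pMc) (hk : ∀ mc mp, IsPMF (k mc mp)) (δ ε : ℝ)
    (h1 : VD pMp qMp ≤ δ)
    (h2 : ∀ mc,
      VD (mixture qMp (k mc)) (mixture pMc fun mc' => mixture qMp (k mc')) ≤ ε) :
    ∀ mc,
      VD (mixture pMp (k mc)) (mixture pMc fun mc' => mixture pMp (k mc')) ≤ ε + 2 * δ :=
  VD_self_mixture_le hMc (fun mc => (VD_mixture_left_le pMp qMp (hk mc)).trans h1) h2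

/-- robustness of the secrecy metric when the public message is
only approximately uniform. -/
theorem statement17 {Mc Mp Zt : Type*} [Fintype Mc] [Fintype Mp] [Fintype Zt] [Nonempty Mp]
    (pMc : Mc → ℝ) (pMp : Mp → ℝ) (k : Mc → Mp → Zt → ℝ)
    (hMc : IsPMF pMc) (hMp : IsPMF pMp) (hk : ∀ mc mp, IsPMF (k mc mp))
    (ε : ℝ)
    -- `V(p_{M_p}, uniform) ≤ ε`
    (h1 : VD pMp (fun _ => 1 / (Fintype.card Mp : ℝ)) ≤ ε)
    -- `max_{m_c} V(p̃_{Z^n|M_c=m_c}, p̃_{Z^n}) ≤ ε` (tilde: `M_p` replaced by uniform)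
    (h2 : ∀ mc,
      VD (fun z => ∑ mp, (1 / (Fintype.card Mp : ℝ)) * k mc mp z)
         (fun z => ∑ mc', pMc mc' * ∑ mp, (1 / (Fintype.card Mp : ℝ)) * k mc' mp z) ≤ ε) :
    -- `max_{m_c} V(p_{Z^n|M_c=m_c}, p_{Z^n}) ≤ 3ε`
    ∀ mc,
      VD (fun z => ∑ mp, pMp mp * k mc mp z)
         (fun z => ∑ mc', pMc mc' * ∑ mp, pMp mp * k mc' mp z) ≤ 3 * ε :=
  fun mc => (statement17_general pMc pMp _ k hMc hk ε ε h1 h2 mc).trans_eq (by ring)
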